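/- Let (X, δ) be a bounded hyperconvex diversity and let (H_i)_{i∈I} be a family of subsets of X directed by reverse inclusion such that for each i ∈ I the restriction (H_i, δ) is a hyperconvex diversity. Then the intersection Y = ⋂_{i∈I} H_i, equipped with the restricted diversity, is a hyperconvex diversity (in particular Y is nonempty). -/

import Mathlib

/-- A diversity on `X`. -/
structure Diversity (X : Type*) [DecidableEq X] where
  delta : Finset X → ℝ
  nonneg : ∀ A, 0 ≤ delta A
  eq_zero_iff : ∀ A, delta A = 0 ↔ A.card ≤ 1
  triangle : ∀ A B C : Finset X, B.Nonempty →
    delta (A ∪ C) ≤ delta (A ∪ B) + delta (B ∪ C)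

namespace Diversity

variable {X : Type*} [DecidableEq X]

/-- Hyperconvexity of a diversity. -/
def Hyperconvex (D : Diversity X) : Prop :=
  ∀ r : Finset X → ℝ, r ∅ = 0 →
    (∀ 𝒜 : Finset (Finset X), D.delta (𝒜.sup id) ≤ ∑ A ∈ 𝒜, r A) →
    ∃ z : X, ∀ Y : Finset X, D.delta (insert z Y) ≤ r Y

/-- A diversity is bounded if its values are uniformly bounded above. -/
def Bounded (D : Diversity X) : Prop :=
  ∃ M : ℝ, 0 ≤ M ∧ ∀ A : Finset X, D.delta A ≤ M

/-- The restriction of a diversity to a subset `H ⊆ X`. -/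
def restrict (D : Diversity X) (H : Set X) : Diversity H where
  delta A := D.delta (A.image Subtype.val)
  nonneg A := D.nonneg _
  eq_zero_iff A := by
    rw [D.eq_zero_iff, Finset.card_image_of_injective A Subtype.val_injective]
  triangle A B C hB := by
    have h := D.triangle (A.image Subtype.val) (B.image Subtype.val) (C.image Subtype.val)
      (hB.image _)
    simpa [Finset.image_union] using h

end Diversity

/-!
For a chain of sets `H i`, assign to each `i` a family of balls centered in `H i` so that the sets
of common points `A i ⊆ H i` are nonempty and nested, and take a maximal such assignment. By
maximality every ball centered in `H i` and containing `A i` belongs to the families of all larger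
sets. If `A i` had diameter `d > 0`, boundedness would give a constant `c < d` with `δ U ≤ |U| c`
for all finite `U ⊆ A i`. For each `A k ⊆ A i`, the balls of radius `c` about the points of `A k`
could then be added to the `k`-th family, so that `A i` would have diameter at most `c`. Hence each
`A i` is a single point, and this point lies in all the `H i`.

For a directed family, choose for each finite set `F` of indices a set `H (s F)` contained in all
`H i`, `i ∈ F`, and antitone in `F`. Intersecting these over the finite subsets of a set `K` of
indices turns unions of chains of index sets into intersections of chains, so the case of chains
reaches all index sets from the finite ones.
-/

section ChainsAndDirectedFamilies

variable {ι α : Type*}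

theorem induction_on_finset_sUnion_isChain {Q : Set α → Prop} (finset : ∀ F : Finset α, Q F)
    (sUnion : ∀ c : Set (Set α), c.Nonempty → IsChain (· ⊆ ·) c → (∀ K ∈ c, Q K) → Q (⋃₀ c))
    (K : Set α) : Q K := by
  classical
  -- Carrying an arbitrary finite set `F` along lets a maximal `L` be enlarged by one point.
  obtain ⟨L, -, hL⟩ := zorn_subset_nonempty {L | L ⊆ K ∧ ∀ F : Finset α, Q (L ∪ F)}
    (fun c hcS hc hne ↦ by
      refine ⟨⋃₀ c, ⟨Set.sUnion_subset fun L hL ↦ (hcS hL).1, fun F ↦ ?_⟩,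
        fun _ ↦ Set.subset_sUnion_of_mem⟩
      have hunion : ⋃₀ c ∪ F = ⋃₀ ((· ∪ (F : Set α)) '' c) := by
        rw [Set.sUnion_image, Set.sUnion_eq_biUnion]
        exact biSup_sup hne
      rw [hunion]
      refine sUnion _ (hne.image _) ?_ (Set.forall_mem_image.2 fun L hL ↦ (hcS hL).2 F)
      exact Monotone.isChain_image (fun _ _ h ↦ Set.union_subset_union_left _ h) hc)
    ∅ ⟨Set.empty_subset K, fun F ↦ by simpa using finset F⟩
  have hKL : K ⊆ L := fun a ha ↦ by
    have hins : insert a L ∈ {L | L ⊆ K ∧ ∀ F : Finset α, Q (L ∪ F)} :=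
      ⟨Set.insert_subset ha hL.prop.1, fun F ↦ by
        simpa [Set.insert_union, Set.union_insert] using hL.prop.2 (insert a F)⟩
    exact hL.le_of_ge hins (Set.subset_insert a L) (Set.mem_insert a L)
  simpa [hL.prop.1.antisymm hKL] using hL.prop.2 ∅

theorem exists_antitone_finset_selection [Nonempty ι] [Preorder α] {f : ι → α}
    (hf : Directed (· ≥ ·) f) :
    ∃ s : Finset ι → ι, Antitone (f ∘ s) ∧ ∀ F, ∀ i ∈ F, f (s F) ≤ f i := by
  classical
  choose u hu using fun F : Finset ι ↦ hf.finset_le F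
  let s : Finset ι → ι := Finset.strongInduction fun F g ↦
    u (F ∪ F.ssubsets.attach.image fun E ↦ g E.1 (Finset.mem_ssubsets.1 E.2))
  have hs (F : Finset ι) : s F = u (F ∪ F.ssubsets.image s) := by
    rw [← F.ssubsets.attach_image_val, Finset.image_image]
    exact Finset.strongInduction_eq _ F
  refine ⟨s, fun E F hEF ↦ ?_, fun F i hi ↦ ?_⟩
  · obtain rfl | hlt := hEF.eq_or_lt
    · exact le_rfl
    · simp only [Function.comp_apply]
      rw [hs F]
      exact hu _ _ (Finset.mem_union_right _
        (Finset.mem_image_of_mem s (Finset.mem_ssubsets.2 hlt)))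
  · rw [hs F]
    exact hu _ _ (Finset.mem_union_left _ hi)

variable [CompleteLattice α]

theorem iInf_finset_subset_coe {g : Finset ι → α} (hg : Antitone g) (F : Finset ι) :
    ⨅ (E : Finset ι) (_ : (E : Set ι) ⊆ F), g E = g F :=
  le_antisymm (iInf₂_le F (Set.Subset.refl _)) (le_iInf₂ fun _ hE ↦ hg (Finset.coe_subset.1 hE))

theorem iInf_finset_subset_sUnion (g : Finset ι → α) {c : Set (Set ι)} (hne : c.Nonempty)
    (hc : IsChain (· ⊆ ·) c) :
    ⨅ (E : Finset ι) (_ : (E : Set ι) ⊆ ⋃₀ c), g E =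
      ⨅ K ∈ c, ⨅ (E : Finset ι) (_ : (E : Set ι) ⊆ K), g E := by
  refine le_antisymm (le_iInf₂ fun K hK ↦ le_iInf₂ fun E hE ↦
    iInf₂_le E (hE.trans (Set.subset_sUnion_of_mem hK))) (le_iInf₂ fun E hE ↦ ?_)
  rw [Set.sUnion_eq_biUnion] at hE
  obtain ⟨K, hK, hEK⟩ :=
    DirectedOn.exists_mem_subset_of_finset_subset_biUnion (f := id) hne hc.directedOn hE
  exact (iInf₂_le K hK).trans (iInf₂_le E hEK)

theorem iInf_mem_of_directed_of_forall_isChain_sInf_mem {S : Set α}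
    (hS : ∀ c ⊆ S, c.Nonempty → IsChain (· ≤ ·) c → sInf c ∈ S) [Nonempty ι] {f : ι → α}
    (hf : Directed (· ≥ ·) f) (hfS : ∀ i, f i ∈ S) : ⨅ i, f i ∈ S := by
  obtain ⟨s, hanti, hle⟩ := exists_antitone_finset_selection hf
  let infOver (K : Set ι) : α := ⨅ (E : Finset ι) (_ : (E : Set ι) ⊆ K), f (s E)
  have infOver_antitone : Antitone infOver := fun _ _ hKL ↦
    le_iInf₂ fun E hE ↦ iInf₂_le E (hE.trans hKL)
  have infOver_mem : infOver Set.univ ∈ S := by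
    refine induction_on_finset_sUnion_isChain (Q := fun K ↦ infOver K ∈ S) (fun F ↦ ?_)
      (fun c hne hc hcS ↦ ?_) Set.univ
    · have hcoe : infOver F = f (s F) := iInf_finset_subset_coe hanti F
      exact hcoe ▸ hfS (s F)
    · have hsInf : infOver (⋃₀ c) = sInf (infOver '' c) :=
        (iInf_finset_subset_sUnion (f ∘ s) hne hc).trans sInf_image.symm
      exact hsInf ▸ hS _ (Set.image_subset_iff.2 hcS) (hne.image _)
        (infOver_antitone.isChain_image hc)
  have hinf : infOver Set.univ = ⨅ i, f i :=
    le_antisymm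
      (le_iInf fun i ↦ (iInf₂_le {i} (Set.subset_univ _)).trans (hle _ i (by simp)))
      (le_iInf₂ fun E _ ↦ iInf_le f (s E))
  exact hinf ▸ infOver_mem

end ChainsAndDirectedFamilies


theorem le_sum_csInf {ι : Type*} {s : Finset ι} {T : ι → Set ℝ} {a : ℝ}
    (hne : ∀ i, (T i).Nonempty)
    (h : ∀ t : ι → ℝ, (∀ i, t i ∈ T i) → a ≤ ∑ i ∈ s, t i) : a ≤ ∑ i ∈ s, sInf (T i) := by
  refine le_of_forall_pos_le_add fun ε hε ↦ ?_
  have hcard : (0 : ℝ) < s.card + 1 := by positivity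
  choose t ht hlt using fun i ↦
    exists_lt_of_csInf_lt (hne i) (lt_add_of_pos_right _ (div_pos hε hcard))
  calc a ≤ ∑ i ∈ s, t i := h t ht
    _ ≤ ∑ i ∈ s, (sInf (T i) + ε / (s.card + 1)) := Finset.sum_le_sum fun i _ ↦ (hlt i).le
    _ = ∑ i ∈ s, sInf (T i) + s.card * (ε / (s.card + 1)) := by
      rw [Finset.sum_add_distrib, Finset.sum_const, nsmul_eq_mul]
    _ ≤ ∑ i ∈ s, sInf (T i) + ε := by
      gcongr
      rw [← mul_div_assoc, div_le_iff₀ hcard]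
      linarith

namespace Diversity

variable {X : Type*} [DecidableEq X]

section Delta

variable (D : Diversity X)

theorem delta_empty : D.delta ∅ = 0 := (D.eq_zero_iff ∅).2 (by simp)

theorem delta_singleton (x : X) : D.delta {x} = 0 := (D.eq_zero_iff {x}).2 (by simp)

theorem delta_le_delta_insert (x : X) (A : Finset X) : D.delta A ≤ D.delta (insert x A) := by
  simpa [delta_singleton, Finset.union_singleton] using
    D.triangle A {x} ∅ (Finset.singleton_nonempty x)

theorem delta_insert_union_le (x : X) (A B : Finset X) :
    D.delta (insert x (A ∪ B)) ≤ D.delta (insert x A) + D.delta (insert x B) := by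
  have h := D.triangle (insert x A) {x} (insert x B) (Finset.singleton_nonempty x)
  rwa [← Finset.insert_union_distrib, Finset.union_singleton, Finset.insert_idem,
    Finset.singleton_union, Finset.insert_idem] at h

theorem delta_insert_sup_le_sum {κ : Type*} (x : X) (s : Finset κ) (Y : κ → Finset X) :
    D.delta (insert x (s.sup Y)) ≤ ∑ k ∈ s, D.delta (insert x (Y k)) := by
  classical
  induction s using Finset.induction_on with
  | empty => simp [delta_singleton]
  | insert k s hk ih =>
    rw [Finset.sum_insert hk, Finset.sup_insert]
    exact (D.delta_insert_union_le x _ _).trans (by gcongr)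

variable {D}

theorem delta_le_card_sub_one_mul {U : Finset X} {d : ℝ} (hU : U.Nonempty)
    (hd : ∀ x ∈ U, ∀ y ∈ U, D.delta {x, y} ≤ d) : D.delta U ≤ (U.card - 1) * d := by
  obtain ⟨x, hx⟩ := hU
  calc D.delta U = D.delta (insert x ((U.erase x).sup singleton)) := by
        rw [Finset.sup_singleton_eq_self, Finset.insert_erase hx]
    _ ≤ ∑ y ∈ U.erase x, D.delta {x, y} := D.delta_insert_sup_le_sum x _ _
    _ ≤ (U.erase x).card • d :=
        Finset.sum_le_card_nsmul _ _ _ fun y hy ↦ hd x hx y (Finset.mem_of_mem_erase hy)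
    _ = (U.card - 1) * d := by
        rw [nsmul_eq_mul, Finset.cast_card_erase_of_mem hx]

/- With `M ≤ N * d` a bound for `D`, the constant `c = N / (N + 1) * d` works: sets with at most
`N + 1` points satisfy `δ U ≤ (|U| - 1) * d ≤ |U| * c`, larger ones `δ U ≤ N * d ≤ |U| * c`. -/
theorem Bounded.exists_lt_forall_delta_le_card_mul (hD : D.Bounded) {d : ℝ} (hd : 0 < d) :
    ∃ c < d, ∀ U : Finset X, (∀ x ∈ U, ∀ y ∈ U, D.delta {x, y} ≤ d) →
      D.delta U ≤ U.card * c := by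
  obtain ⟨M, -, hM⟩ := hD
  obtain ⟨N, hN⟩ := exists_nat_ge (M / d)
  rw [div_le_iff₀ hd] at hN
  have hN_pos : (0 : ℝ) < N + 1 := by positivity
  refine ⟨N / (N + 1) * d, mul_lt_of_lt_one_left hd ((div_lt_one hN_pos).2 (lt_add_one _)),
    fun U hU ↦ ?_⟩
  obtain rfl | hne := U.eq_empty_or_nonempty
  · simp [delta_empty]
  rw [show U.card * (N / (N + 1) * d) = U.card * (N * d) / (N + 1) by ring, le_div_iff₀ hN_pos]
  obtain hcard | hcard := le_total (U.card : ℝ) (N + 1)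
  · calc D.delta U * (N + 1) ≤ (U.card - 1) * d * (N + 1) := by
          gcongr
          exact delta_le_card_sub_one_mul hne hU
      _ = U.card * (N * d) - (N + 1 - U.card) * d := by ring
      _ ≤ U.card * (N * d) := sub_le_self _ (mul_nonneg (sub_nonneg.2 hcard) hd.le)
  · calc D.delta U * (N + 1) ≤ N * d * U.card := by
          gcongr
          exact (hM U).trans hN
      _ = U.card * (N * d) := mul_comm _ _

end Delta

section Balls

variable (D : Diversity X)

/-- The ball of radius `t` about the finite set `Y`. Families of balls are encoded as sets of
pairs `(Y, t)`. -/
def ball (Y : Finset X) (t : ℝ) : Set X := {z | D.delta (insert z Y) ≤ t}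

/-- The common points of the family of balls `C`. -/
def ballInter (C : Set (Finset X × ℝ)) : Set X := {z | ∀ B ∈ C, z ∈ D.ball B.1 B.2}

/-- The necessary condition for a family of balls to have a common point, as it appears in the
definition of hyperconvexity. -/
def Consistent (C : Set (Finset X × ℝ)) : Prop :=
  ∀ 𝒞 : Finset (Finset X × ℝ), (𝒞 : Set (Finset X × ℝ)) ⊆ C →
    D.delta (𝒞.sup Prod.fst) ≤ ∑ B ∈ 𝒞, B.2

/-- Hyperconvexity of the subset `H`, phrased in the ambient space and with arbitrary families of
balls instead of functions `r` defined on all finite subsets of `H`. For bounded diversities it is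
equivalent to hyperconvexity of the restriction. -/
def HyperconvexOn (H : Set X) : Prop :=
  ∀ C : Set (Finset X × ℝ), (∀ B ∈ C, (B.1 : Set X) ⊆ H) → D.Consistent C →
    (H ∩ D.ballInter C).Nonempty

variable {D} {C C' : Set (Finset X × ℝ)}

theorem mem_ball_singleton_comm {x y : X} {t : ℝ} : x ∈ D.ball {y} t ↔ y ∈ D.ball {x} t := by
  simp only [ball, Set.mem_ofPred_eq, Finset.pair_comm]

theorem delta_insert_sup_le_of_mem_ballInter {z : X} (hz : z ∈ D.ballInter C)
    {𝒞 : Finset (Finset X × ℝ)} (h𝒞 : (𝒞 : Set (Finset X × ℝ)) ⊆ C) :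
    D.delta (insert z (𝒞.sup Prod.fst)) ≤ ∑ B ∈ 𝒞, B.2 :=
  (D.delta_insert_sup_le_sum z 𝒞 Prod.fst).trans
    (Finset.sum_le_sum fun B hB ↦ hz B (h𝒞 hB))

theorem consistent_of_nonempty_ballInter (h : (D.ballInter C).Nonempty) : D.Consistent C :=
  fun _ h𝒞 ↦
    (D.delta_le_delta_insert h.some _).trans (delta_insert_sup_le_of_mem_ballInter h.some_mem h𝒞)

theorem consistent_empty : D.Consistent ∅ := fun 𝒞 h𝒞 ↦ by
  obtain rfl : 𝒞 = ∅ := by simpa using h𝒞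
  simp [delta_empty]

theorem Consistent.radius_nonneg (hC : D.Consistent C) {B : Finset X × ℝ} (hB : B ∈ C) :
    0 ≤ B.2 :=
  (D.nonneg _).trans (by simpa using hC {B} (by simpa using hB))

theorem Consistent.mono (hC : D.Consistent C') (h : C ⊆ C') : D.Consistent C :=
  fun 𝒞 h𝒞 ↦ hC 𝒞 (h𝒞.trans h)

theorem Consistent.iUnion_of_directed {κ : Type*} [Nonempty κ] {C : κ → Set (Finset X × ℝ)}
    (hdir : Directed (· ⊆ ·) C) (hC : ∀ k, D.Consistent (C k)) : D.Consistent (⋃ k, C k) :=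
  fun 𝒞 h𝒞 ↦ by
    obtain ⟨k, hk⟩ := hdir.exists_mem_subset_of_finset_subset_biUnion h𝒞
    exact hC k 𝒞 hk

theorem HyperconvexOn.nonempty {H : Set X} (hH : D.HyperconvexOn H) : H.Nonempty :=
  (hH ∅ (by simp) consistent_empty).left

theorem Consistent.union_redundant (hC : D.Consistent C) :
    D.Consistent (C ∪ {B | ∀ A, D.delta (A ∪ B.1) ≤ D.delta A + B.2}) := by
  classical
  intro 𝒞 h𝒞
  have hred (A : Finset X) (𝒬 : Finset (Finset X × ℝ))
      (h𝒬 : ∀ B ∈ 𝒬, ∀ A, D.delta (A ∪ B.1) ≤ D.delta A + B.2) :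
      D.delta (A ∪ 𝒬.sup Prod.fst) ≤ D.delta A + ∑ B ∈ 𝒬, B.2 := by
    induction 𝒬 using Finset.induction_on generalizing A with
    | empty => simp
    | insert B 𝒬 hB ih =>
      rw [Finset.forall_mem_insert] at h𝒬
      rw [Finset.sum_insert hB, Finset.sup_insert, Finset.sup_eq_union, ← Finset.union_assoc,
        ← add_assoc]
      exact (ih _ h𝒬.2).trans (by gcongr; exact h𝒬.1 A)
  rw [← Finset.filter_union_filter_not_eq (· ∈ C) 𝒞, Finset.sup_union, Finset.sup_eq_union,
    Finset.filter_union_filter_not_eq, ← Finset.sum_filter_add_sum_filter_not 𝒞 (· ∈ C)]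
  refine (hred _ _ fun B hB ↦ ?_).trans ?_
  · obtain ⟨hB𝒞, hBC⟩ := Finset.mem_filter.1 hB
    exact (h𝒞 hB𝒞).resolve_left hBC
  · gcongr
    exact hC _ fun B hB ↦ (Finset.mem_filter.1 hB).2

theorem exists_mem_delta_insert_sup_singletons_le_sum {A : Set X} (hA : A.Nonempty) {c : ℝ}
    (hc : ∀ U : Finset X, (U : Set X) ⊆ A → D.delta U ≤ U.card * c)
    {𝒞 : Finset (Finset X × ℝ)} (h𝒞 : ∀ B ∈ 𝒞, ∃ x ∈ A, B = ({x}, c)) :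
    ∃ x ∈ A, D.delta (insert x (𝒞.sup Prod.fst)) ≤ ∑ B ∈ 𝒞, B.2 := by
  have hc_nonneg : 0 ≤ c := by
    simpa [delta_singleton] using hc {hA.some} (by simpa using hA.some_mem)
  have hsum : ∑ B ∈ 𝒞, B.2 = 𝒞.card * c := by
    rw [← nsmul_eq_mul]
    refine Finset.sum_eq_card_nsmul fun B hB ↦ ?_
    obtain ⟨x, -, rfl⟩ := h𝒞 B hB
    rfl
  have hsub : ((𝒞.sup Prod.fst : Finset X) : Set X) ⊆ A := fun y hy ↦ by
    obtain ⟨B, hB, hyB⟩ := Finset.mem_sup.1 hy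
    obtain ⟨x, hx, rfl⟩ := h𝒞 B hB
    obtain rfl : y = x := by simpa using hyB
    exact hx
  have hcard : (𝒞.sup Prod.fst).card ≤ 𝒞.card := by
    rw [Finset.sup_eq_biUnion]
    refine (Finset.card_biUnion_le_card_mul _ _ 1 fun B hB ↦ ?_).trans_eq (mul_one _)
    obtain ⟨x, -, rfl⟩ := h𝒞 B hB
    simp
  obtain hempty | ⟨x, hx⟩ := (𝒞.sup Prod.fst).eq_empty_or_nonempty
  · refine ⟨hA.some, hA.some_mem, ?_⟩
    rw [hempty, hsum, insert_empty_eq, delta_singleton]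
    positivity
  · refine ⟨x, hsub hx, ?_⟩
    rw [Finset.insert_eq_of_mem hx, hsum]
    exact (hc _ hsub).trans (by gcongr)

theorem consistent_union_singletons {A : Set X} (hA : A.Nonempty) (hAC : A ⊆ D.ballInter C)
    {c : ℝ} (hc : ∀ U : Finset X, (U : Set X) ⊆ A → D.delta U ≤ U.card * c) :
    D.Consistent (C ∪ {B | ∃ x ∈ A, B = ({x}, c)}) := by
  classical
  intro 𝒞 h𝒞
  obtain ⟨x, hx, hle⟩ := exists_mem_delta_insert_sup_singletons_le_sum hA hc
    (𝒞 := 𝒞.filter (· ∉ C))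
    fun B hB ↦ (h𝒞 (Finset.mem_filter.1 hB).1).resolve_left (Finset.mem_filter.1 hB).2
  have hleC := delta_insert_sup_le_of_mem_ballInter (hAC hx) (𝒞 := 𝒞.filter (· ∈ C))
    fun B hB ↦ (Finset.mem_filter.1 hB).2
  calc D.delta (𝒞.sup Prod.fst)
      = D.delta ((𝒞.filter (· ∈ C)).sup Prod.fst ∪ (𝒞.filter (· ∉ C)).sup Prod.fst) := by
        rw [← Finset.sup_eq_union, ← Finset.sup_union, Finset.filter_union_filter_not_eq]
    _ ≤ D.delta (insert x ((𝒞.filter (· ∈ C)).sup Prod.fst ∪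
          (𝒞.filter (· ∉ C)).sup Prod.fst)) := D.delta_le_delta_insert x _
    _ ≤ ∑ B ∈ 𝒞 with B ∈ C, B.2 + ∑ B ∈ 𝒞 with B ∉ C, B.2 :=
        (D.delta_insert_union_le x _ _).trans (add_le_add hleC hle)
    _ = ∑ B ∈ 𝒞, B.2 := Finset.sum_filter_add_sum_filter_not 𝒞 (· ∈ C) _

end Balls

section Hyperconvex

variable {D : Diversity X} {C : Set (Finset X × ℝ)} {H : Set X}

theorem consistent_image_iff {κ : Type*} {f : κ → Finset X × ℝ} (hf : Function.Injective f)
    {S : Set κ} :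
    D.Consistent (f '' S) ↔ ∀ s : Finset κ, (s : Set κ) ⊆ S →
      D.delta (s.sup fun k ↦ (f k).1) ≤ ∑ k ∈ s, (f k).2 := by
  classical
  simp only [Consistent, Finset.subset_set_image_iff, forall_exists_index, and_imp]
  rw [forall_comm]
  simp only [forall_apply_eq_imp_iff, Finset.sup_image, Finset.sum_image hf.injOn]
  rfl

theorem consistent_range_iff {r : Finset X → ℝ} :
    D.Consistent (Set.range fun Y ↦ (Y, r Y)) ↔
      ∀ 𝒜 : Finset (Finset X), D.delta (𝒜.sup id) ≤ ∑ A ∈ 𝒜, r A := by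
  rw [← Set.image_univ, consistent_image_iff fun _ _ h ↦ congrArg Prod.fst h]
  simp only [Set.subset_univ, true_imp_iff]
  rfl

theorem Hyperconvex.nonempty_ballInter (hD : D.Hyperconvex) (hB : D.Bounded)
    (hC : D.Consistent C) : (D.ballInter C).Nonempty := by
  obtain ⟨M, -, hM⟩ := hB
  set E := C ∪ {B | ∀ A, D.delta (A ∪ B.1) ≤ D.delta A + B.2}
  have hE : D.Consistent E := hC.union_redundant
  have hne (Y : Finset X) : {t | (Y, t) ∈ E}.Nonempty :=
    ⟨M, Or.inr fun A ↦ (hM _).trans (le_add_of_nonneg_left (D.nonneg A))⟩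
  have hbdd (Y : Finset X) : BddBelow {t | (Y, t) ∈ E} := ⟨0, fun _ ht ↦ hE.radius_nonneg ht⟩
  have hempty : sInf {t | (∅, t) ∈ E} = 0 :=
    IsLeast.csInf_eq ⟨Or.inr (by simp), fun _ ht ↦ hE.radius_nonneg ht⟩
  obtain ⟨z, hz⟩ := hD (fun Y ↦ sInf {t | (Y, t) ∈ E}) hempty fun 𝒜 ↦
    le_sum_csInf hne fun t ht ↦
      consistent_range_iff.1 (hE.mono (Set.range_subset_iff.2 ht)) 𝒜
  exact ⟨z, fun B hB ↦ (hz B.1).trans (csInf_le (hbdd B.1) (Or.inl hB))⟩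

theorem hyperconvex_of_forall_nonempty_ballInter
    (h : ∀ C, D.Consistent C → (D.ballInter C).Nonempty) : D.Hyperconvex := fun r _ hr ↦ by
  obtain ⟨z, hz⟩ := h _ (consistent_range_iff.2 hr)
  exact ⟨z, fun Y ↦ hz _ (Set.mem_range_self Y)⟩

theorem Bounded.restrict (hB : D.Bounded) (H : Set X) : (D.restrict H).Bounded :=
  hB.imp fun _ hM ↦ ⟨hM.1, fun _ ↦ hM.2 _⟩

theorem consistent_restrict_iff {C : Set (Finset H × ℝ)} :
    (D.restrict H).Consistent C ↔
      D.Consistent (Prod.map (Finset.image Subtype.val) id '' C) := by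
  rw [consistent_image_iff
    ((Finset.image_injective Subtype.val_injective).prodMap Function.injective_id)]
  have himage_sup (s : Finset (Finset H × ℝ)) : (s.sup Prod.fst).image Subtype.val =
      s.sup fun B ↦ B.1.image Subtype.val :=
    Finset.apply_sup_eq_sup_comp (Finset.image Subtype.val) (fun _ _ ↦ Finset.image_union _ _)
      (Finset.image_empty _)
  simp only [Consistent, restrict, himage_sup, Prod.map_fst, Prod.map_snd, id]

theorem ballInter_restrict {C : Set (Finset H × ℝ)} :
    (D.restrict H).ballInter C =
      Subtype.val ⁻¹' D.ballInter (Prod.map (Finset.image Subtype.val) id '' C) := by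
  ext z
  simp only [ballInter, ball, restrict, Set.mem_ofPred_eq, Set.mem_preimage,
    Set.forall_mem_image, Prod.map_fst, Prod.map_snd, id, Finset.image_insert]

theorem hyperconvexOn_iff_hyperconvex_restrict (hB : D.Bounded) :
    D.HyperconvexOn H ↔ (D.restrict H).Hyperconvex := by
  refine ⟨fun h ↦ hyperconvex_of_forall_nonempty_ballInter fun C hC ↦ ?_, fun h C hCH hC ↦ ?_⟩
  · obtain ⟨z, hzH, hz⟩ := h _ (Set.forall_mem_image.2 fun B _ ↦ by simp)
      (consistent_restrict_iff.1 hC)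
    exact ⟨⟨z, hzH⟩, by rwa [ballInter_restrict]⟩
  · have himage : Prod.map (Finset.image Subtype.val) id ''
        (Prod.map (Finset.image ((↑) : H → X)) id ⁻¹' C) = C :=
      Set.image_preimage_eq_of_subset fun B hB ↦ by
        obtain ⟨Y, -, hY⟩ := (Finset.subset_set_image_iff (s := Set.univ)).1
          ((hCH B hB).trans_eq (Set.image_univ.trans Subtype.range_coe).symm)
        exact ⟨(Y, B.2), Prod.ext hY rfl⟩
    obtain ⟨z, hz⟩ := h.nonempty_ballInter (hB.restrict H)
      (consistent_restrict_iff.2 (himage.symm ▸ hC))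
    rw [ballInter_restrict, himage] at hz
    exact ⟨z, z.2, hz⟩

end Hyperconvex

section BallSystems

/-- A monotone system of admissible sets `H i ∩ D.ballInter (C i)` inside the sets `H i`, recorded
by the families of balls `C i` rather than by the sets: this way systems are ordered pointwise by
inclusion, and larger families give smaller sets. -/
structure IsBallSystem {ι : Type*} [Preorder ι] (D : Diversity X) (H : ι → Set X)
    (C : ι → Set (Finset X × ℝ)) : Prop where
  centers_subset : ∀ i, ∀ B ∈ C i, (B.1 : Set X) ⊆ H i
  consistent : ∀ i, D.Consistent (C i)
  monotone_inter : Monotone fun i ↦ H i ∩ D.ballInter (C i)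

variable {ι : Type*} {D : Diversity X} {H : ι → Set X} {C : ι → Set (Finset X × ℝ)}

theorem IsBallSystem.const [Preorder ι] (hmono : Monotone H) {C₀ : Set (Finset X × ℝ)}
    (hC₀H : ∀ i, ∀ B ∈ C₀, (B.1 : Set X) ⊆ H i) (hC₀ : D.Consistent C₀) :
    D.IsBallSystem H fun _ ↦ C₀ :=
  ⟨hC₀H, fun _ ↦ hC₀, fun _ _ hij ↦ Set.inter_subset_inter_left _ (hmono hij)⟩

theorem IsBallSystem.sSup_of_isChain [Preorder ι] {𝓒 : Set (ι → Set (Finset X × ℝ))}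
    (hne : 𝓒.Nonempty) (hchain : IsChain (· ≤ ·) 𝓒) (h𝓒 : ∀ C ∈ 𝓒, D.IsBallSystem H C) :
    D.IsBallSystem H (sSup 𝓒) := by
  have : Nonempty 𝓒 := hne.to_subtype
  have happly (i : ι) : sSup 𝓒 i = ⋃ C : 𝓒, C.1 i := sSup_apply
  refine ⟨fun i B hB ↦ ?_, fun i ↦ ?_, fun i j hij z hz ↦ ?_⟩
  · rw [happly, Set.mem_iUnion] at hB
    obtain ⟨C, hB⟩ := hB
    exact (h𝓒 C C.2).centers_subset i B hB
  · rw [happly]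
    refine Consistent.iUnion_of_directed (fun C C' ↦ ?_) fun C ↦ (h𝓒 C C.2).consistent i
    obtain ⟨C'', hC'', h, h'⟩ := hchain.directedOn C C.2 C' C'.2
    exact ⟨⟨C'', hC''⟩, h i, h' i⟩
  · have hz_mem (C : 𝓒) : z ∈ H j ∩ D.ballInter (C.1 j) :=
      (h𝓒 C C.2).monotone_inter hij ⟨hz.1, fun B hB ↦ hz.2 B (le_sSup C.2 i hB)⟩
    refine ⟨(hz_mem (Classical.arbitrary 𝓒)).1, fun B hB ↦ ?_⟩
    rw [happly, Set.mem_iUnion] at hB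
    obtain ⟨C, hB⟩ := hB
    exact (hz_mem C).2 B hB

theorem IsBallSystem.exists_le_maximal [Preorder ι] (hC : D.IsBallSystem H C) :
    ∃ C', C ≤ C' ∧ Maximal (D.IsBallSystem H) C' :=
  zorn_le_nonempty₀ {C | D.IsBallSystem H C}
    (fun 𝓒 h𝓒 hchain C hC ↦
      ⟨sSup 𝓒, .sSup_of_isChain ⟨C, hC⟩ hchain h𝓒, fun _ ↦ le_sSup⟩) C hC

theorem IsBallSystem.nonempty [Preorder ι] (hC : D.IsBallSystem H C)
    (hH : ∀ i, D.HyperconvexOn (H i)) (i : ι) : (H i ∩ D.ballInter (C i)).Nonempty :=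
  hH i _ (hC.centers_subset i) (hC.consistent i)

variable [LinearOrder ι]

theorem mem_of_maximal_isBallSystem_of_inter_subset_ball
    (hC : Maximal (D.IsBallSystem H) C) (hmono : Monotone H)
    (hH : ∀ i, D.HyperconvexOn (H i)) {i j : ι} (hij : i ≤ j) {Y : Finset X} {t : ℝ}
    (hY : (Y : Set X) ⊆ H i) (hball : H i ∩ D.ballInter (C i) ⊆ D.ball Y t) :
    (Y, t) ∈ C j := by
  have hsystem : D.IsBallSystem H (C ⊔ fun k ↦ {B | i ≤ k ∧ B = (Y, t)}) := by
    refine ⟨fun k B hB ↦ ?_, fun k ↦ ?_, fun k l hkl z hz ↦ ?_⟩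
    · obtain hB | ⟨hik, rfl⟩ := hB
      · exact hC.prop.centers_subset k B hB
      · exact hY.trans (hmono hik)
    · obtain ⟨z, hz⟩ := hC.prop.nonempty hH (min i k)
      refine consistent_of_nonempty_ballInter ⟨z, fun B hB ↦ ?_⟩
      obtain hB | ⟨-, rfl⟩ := hB
      · exact (hC.prop.monotone_inter (min_le_right i k) hz).2 B hB
      · exact hball (hC.prop.monotone_inter (min_le_left i k) hz)
    · have hzC (m : ι) (hkm : k ≤ m) : z ∈ H m ∩ D.ballInter (C m) :=
        hC.prop.monotone_inter hkm ⟨hz.1, fun B hB ↦ hz.2 B (Or.inl hB)⟩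
      refine ⟨(hzC l hkl).1, fun B hB ↦ ?_⟩
      obtain hB | ⟨-, rfl⟩ := hB
      · exact (hzC l hkl).2 B hB
      · obtain hik | hki := le_total i k
        · exact hz.2 _ (Or.inr ⟨hik, rfl⟩)
        · exact hball (hzC i hki)
  exact hC.le_of_ge hsystem le_sup_left j (Or.inr ⟨hij, rfl⟩)

theorem inter_subset_ball_of_maximal_isBallSystem (hC : Maximal (D.IsBallSystem H) C)
    (hmono : Monotone H) (hH : ∀ i, D.HyperconvexOn (H i)) {i : ι} {c : ℝ}
    (hc : ∀ U : Finset X, (U : Set X) ⊆ H i ∩ D.ballInter (C i) → D.delta U ≤ U.card * c)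
    {x : X} (hx : x ∈ H i ∩ D.ballInter (C i)) :
    H i ∩ D.ballInter (C i) ⊆ D.ball {x} c := by
  have hsystem : D.IsBallSystem H
      (C ⊔ fun k ↦ {B | k ≤ i ∧ ∃ w ∈ H k ∩ D.ballInter (C k), B = ({w}, c)}) := by
    refine ⟨fun k B hB ↦ ?_, fun k ↦ ?_, fun k l hkl z hz ↦ ?_⟩
    · obtain hB | ⟨-, w, hw, rfl⟩ := hB
      · exact hC.prop.centers_subset k B hB
      · simpa using hw.1
    · by_cases hki : k ≤ i
      · refine (consistent_union_singletons (hC.prop.nonempty hH k) Set.inter_subset_right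
          fun U hU ↦ hc U (hU.trans (hC.prop.monotone_inter hki))).mono ?_
        exact Set.union_subset_union_right _ fun B hB ↦ hB.2
      · exact (hC.prop.consistent k).mono (Set.union_subset subset_rfl fun B hB ↦ (hki hB.1).elim)
    · have hzC : z ∈ H k ∩ D.ballInter (C k) := ⟨hz.1, fun B hB ↦ hz.2 B (Or.inl hB)⟩
      have hzCl := hC.prop.monotone_inter hkl hzC
      refine ⟨hzCl.1, fun B hB ↦ ?_⟩
      obtain hB | ⟨hli, w, hw, rfl⟩ := hB
      · exact hzCl.2 B hB
      · have hball : H k ∩ D.ballInter (C k) ⊆ D.ball {z} c := fun v hv ↦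
          mem_ball_singleton_comm.1 (hz.2 _ (Or.inr ⟨hkl.trans hli, v, hv, rfl⟩))
        have hzc : ({z}, c) ∈ C l :=
          mem_of_maximal_isBallSystem_of_inter_subset_ball hC hmono hH hkl
            (by simpa using hz.1) hball
        exact mem_ball_singleton_comm.1 (hw.2 _ hzc)
  exact fun y hy ↦ hy.2 _ (hC.le_of_ge hsystem le_sup_left i (Or.inr ⟨le_rfl, x, hx, rfl⟩))

theorem Bounded.subsingleton_of_maximal_isBallSystem (hB : D.Bounded)
    (hC : Maximal (D.IsBallSystem H) C) (hmono : Monotone H)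
    (hH : ∀ i, D.HyperconvexOn (H i)) (i : ι) : (H i ∩ D.ballInter (C i)).Subsingleton := by
  set A := H i ∩ D.ballInter (C i)
  by_contra hA
  obtain ⟨x, hx, y, hy, hxy⟩ := Set.not_subsingleton_iff.1 hA
  let S : Set ℝ := Set.image2 (fun u v ↦ D.delta {u, v}) A A
  have hbdd : BddAbove S := hB.imp fun M hM ↦ Set.forall_mem_image2.2 fun u _ v _ ↦ hM.2 _
  have hle {u v : X} (hu : u ∈ A) (hv : v ∈ A) : D.delta {u, v} ≤ sSup S :=
    le_csSup hbdd (Set.mem_image2_of_mem hu hv)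
  have hpos : 0 < sSup S := by
    refine lt_of_lt_of_le ((D.nonneg _).lt_of_ne fun h ↦ ?_) (hle hx hy)
    simpa [Finset.card_pair hxy] using (D.eq_zero_iff _).1 h.symm
  obtain ⟨c, hcS, hc⟩ := hB.exists_lt_forall_delta_le_card_mul hpos
  refine hcS.not_ge (csSup_le ⟨_, Set.mem_image2_of_mem hx hy⟩ (Set.forall_mem_image2.2 ?_))
  intro u hu v hv
  exact inter_subset_ball_of_maximal_isBallSystem hC hmono hH
    (fun U hU ↦ hc U fun u hu v hv ↦ hle (hU hu) (hU hv)) hv hu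

theorem Bounded.hyperconvexOn_iInter_of_monotone [Nonempty ι] (hB : D.Bounded)
    (hmono : Monotone H) (hH : ∀ i, D.HyperconvexOn (H i)) : D.HyperconvexOn (⋂ i, H i) := by
  intro C₀ hC₀H hC₀
  obtain ⟨C, hle, hC⟩ := (IsBallSystem.const hmono
    (fun i B hB ↦ (hC₀H B hB).trans (Set.iInter_subset H i)) hC₀).exists_le_maximal
  obtain ⟨z, hz⟩ := hC.prop.nonempty hH (Classical.arbitrary ι)
  have hzC (i : ι) : z ∈ H i ∩ D.ballInter (C i) := by
    obtain ⟨w, hw⟩ := hC.prop.nonempty hH (min i (Classical.arbitrary ι))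
    have hwz : w = z := hB.subsingleton_of_maximal_isBallSystem hC hmono hH _
      (hC.prop.monotone_inter (min_le_right _ _) hw) hz
    exact hwz ▸ hC.prop.monotone_inter (min_le_left _ _) hw
  exact ⟨z, Set.mem_iInter.2 fun i ↦ (hzC i).1,
    fun B hB ↦ (hzC (Classical.arbitrary ι)).2 B (hle _ hB)⟩

theorem Bounded.hyperconvexOn_sInter_of_isChain (hB : D.Bounded) {c : Set (Set X)}
    (hc : ∀ K ∈ c, D.HyperconvexOn K) (hne : c.Nonempty) (hchain : IsChain (· ≤ ·) c) :
    D.HyperconvexOn (⋂₀ c) := by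
  classical
  have : Nonempty c := hne.to_subtype
  let _ : LinearOrder c := hchain.linearOrder
  rw [Set.sInter_eq_iInter]
  exact hB.hyperconvexOn_iInter_of_monotone (fun _ _ h ↦ h) fun K ↦ hc K K.2

end BallSystems

theorem Bounded.hyperconvexOn_iInter_of_directed {ι : Type*} [Nonempty ι] {D : Diversity X}
    (hB : D.Bounded) {H : ι → Set X} (hdir : Directed (· ⊇ ·) H)
    (hH : ∀ i, D.HyperconvexOn (H i)) : D.HyperconvexOn (⋂ i, H i) :=
  iInf_mem_of_directed_of_forall_isChain_sInf_mem (S := {K | D.HyperconvexOn K})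
    (fun _ ↦ hB.hyperconvexOn_sInter_of_isChain) hdir hH

end Diversity

theorem hyperconvex_iInter_of_directed_hyperconvex_restrictions_general
    {X : Type*} [DecidableEq X] {I : Type*} [Nonempty I] (D : Diversity X) (hB : D.Bounded)
    (H : I → Set X) (hdir : Directed (fun s t : Set X => t ⊆ s) H)
    (hhyp : ∀ i : I, (D.restrict (H i)).Hyperconvex) :
    (⋂ i, H i).Nonempty ∧ (D.restrict (⋂ i, H i)).Hyperconvex := by
  have hY : D.HyperconvexOn (⋂ i, H i) := hB.hyperconvexOn_iInter_of_directed hdir fun i ↦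
    (Diversity.hyperconvexOn_iff_hyperconvex_restrict hB).2 (hhyp i)
  exact ⟨hY.nonempty, (Diversity.hyperconvexOn_iff_hyperconvex_restrict hB).1 hY⟩

/-- If `(X, δ)` is a bounded hyperconvex diversity and `(H i)_{i ∈ I}`
is a nonempty family of subsets of `X`, directed by reverse inclusion, such that each
restriction `(H i, δ)` is a hyperconvex diversity, then the intersection `⋂ i, H i`,
equipped with the restricted diversity, is a (nonempty) hyperconvex diversity. -/
theorem hyperconvex_iInter_of_directed_hyperconvex_restrictions
    {X : Type*} [DecidableEq X] {I : Type*} [Nonempty I]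
    (D : Diversity X) (hH : D.Hyperconvex) (hB : D.Bounded)
    (H : I → Set X)
    (hdir : Directed (fun s t : Set X => t ⊆ s) H)
    (hhyp : ∀ i : I, (D.restrict (H i)).Hyperconvex) :
    (⋂ i, H i).Nonempty ∧ (D.restrict (⋂ i, H i)).Hyperconvex := by
  exact hyperconvex_iInter_of_directed_hyperconvex_restrictions_general D hB H hdir hhyp
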